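/- arXiv:1606.01986 — 3 statements merged into one kernel-verified Lean document; each statement's English description precedes it below -/
import Mathlib

section
/- For all real numbers x ≥ 0, α > 0, and u, one has ∫_{0}^{x} {x choose s} α^s e^{us} ds = 2 α^{x/2} e^{ux/2} [ cosh((x/2)√(4 + L²)) − cosh((x/2) L) + (2/√(4 + L²)) sinh((x/2)√(4 + L²)) ], where L = u + log α. -/
/-- The continuous binomial coefficient `{x choose s}`. -/
noncomputable def cbinom (x s : ℝ) : ℝ :=
  ∑' n : ℕ, (s * (x - s)) ^ n *
    (2 / ((n.factorial : ℝ)) ^ 2 + x / ((n.factorial : ℝ) * ((n + 1).factorial : ℝ)))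

/-!
Put `h = x / 2`, `t = s - h` and `L = u + log α`. Then `s (x - s) = h² - t²`, and up to the factor
`exp (L h)` the integral is that of a power series in `h² - t²` against `exp (L t)` over `[-h, h]`.
As the series is even in `t`, only `cosh (L t)` contributes, and expanding `cosh` as well leaves a
double series of Euler beta integrals `∫ (h² - t²)ⁿ t²ᵐ`. Their values depend on `n` and `m`
separately only through `4ⁿ n! (2m)! / m!`, so by the binomial theorem the terms with `n + m = N`
add up to powers of `4 + L²`, and what is left are the Taylor series of `sinh` and `cosh` at
`h √(4 + L²)` and `h L`. The subtracted `cosh (h L)` is the binomial term missing from the sum over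
`n` with coefficients `1 / (n! (n + 1)!)`.
-/

open Finset intervalIntegral MeasureTheory
open scoped Nat

section ExponentialAntidiagonal

variable {𝕜 : Type*} [Field 𝕜] [CharZero 𝕜]

lemma sum_antidiagonal_pow_div_factorial_mul (a b : 𝕜) (N : ℕ) :
    ∑ p ∈ antidiagonal N, a ^ p.1 / p.1 ! * (b ^ p.2 / p.2 !) = (a + b) ^ N / N ! := by
  rw [(Commute.all a b).add_pow', sum_div]
  refine sum_congr rfl fun p hp ↦ ?_
  obtain rfl := mem_antidiagonal.mp hp
  have hfact : ((p.1 + p.2)! : 𝕜) ≠ 0 := mod_cast (p.1 + p.2).factorial_ne_zero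
  rw [nsmul_eq_mul, Nat.cast_add_choose]
  field_simp

lemma sum_antidiagonal_pow_succ_div_factorial_mul (a b : 𝕜) (N : ℕ) :
    ∑ p ∈ antidiagonal N, a ^ (p.1 + 1) / (p.1 + 1)! * (b ^ p.2 / p.2 !) =
      ((a + b) ^ (N + 1) - b ^ (N + 1)) / (N + 1)! := by
  rw [sub_div, ← sum_antidiagonal_pow_div_factorial_mul a b (N + 1), Nat.sum_antidiagonal_succ]
  simp

end ExponentialAntidiagonal

section SymmetricInterval

lemma add_one_mul_integral_sq_sub_sq_pow_succ_mul_pow (h : ℝ) (n m : ℕ) :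
    (m + 1) * ∫ t in -h..h, (h ^ 2 - t ^ 2) ^ (n + 1) * t ^ m =
      2 * (n + 1) * ∫ t in -h..h, (h ^ 2 - t ^ 2) ^ n * t ^ (m + 2) := by
  have hasDerivAt_boundary (t : ℝ) :
      HasDerivAt (fun t : ℝ ↦ (h ^ 2 - t ^ 2) ^ (n + 1) * t ^ (m + 1))
        ((m + 1) * ((h ^ 2 - t ^ 2) ^ (n + 1) * t ^ m) -
          2 * (n + 1) * ((h ^ 2 - t ^ 2) ^ n * t ^ (m + 2))) t := by
    have hbase : HasDerivAt (fun t : ℝ ↦ h ^ 2 - t ^ 2) (-(2 * t)) t := by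
      simpa using (hasDerivAt_pow 2 t).const_sub (h ^ 2)
    refine ((hbase.fun_pow (n + 1)).mul (hasDerivAt_pow (m + 1) t)).congr_deriv ?_
    simp only [Nat.cast_add, Nat.cast_one, Nat.add_sub_cancel]
    ring
  have integral_boundary := integral_eq_sub_of_hasDerivAt
    (fun t (_ : t ∈ Set.uIcc (-h) h) ↦ hasDerivAt_boundary t)
    (Continuous.intervalIntegrable (by fun_prop) _ _)
  rw [intervalIntegral.integral_sub (Continuous.intervalIntegrable (by fun_prop) _ _)
    (Continuous.intervalIntegrable (by fun_prop) _ _),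
    intervalIntegral.integral_const_mul, intervalIntegral.integral_const_mul] at integral_boundary
  simpa [sub_eq_zero] using integral_boundary

lemma integral_sq_sub_sq_pow_mul_pow_two_mul (h : ℝ) (n m : ℕ) :
    ∫ t in -h..h, (h ^ 2 - t ^ 2) ^ n * t ^ (2 * m) =
      2 * h ^ (2 * (n + m) + 1) * (n + m)! / (2 * (n + m) + 1)! *
        (4 ^ n * n ! * ((2 * m)! / m !)) := by
  induction n generalizing m with
  | zero =>
    have hodd : (-h) ^ (2 * m + 1) = -h ^ (2 * m + 1) := (odd_two_mul_add_one m).neg_pow h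
    simp only [pow_zero, one_mul, integral_pow, hodd, zero_add, Nat.factorial_succ (2 * m)]
    push_cast
    field_simp
    norm_num
  | succ n ih =>
    have recursion := add_one_mul_integral_sq_sub_sq_pow_succ_mul_pow h n (2 * m)
    rw [show 2 * m + 2 = 2 * (m + 1) by ring, ih (m + 1), ← Nat.succ_add_eq_add_succ n m,
      show 2 * (m + 1) = 2 * m + 1 + 1 by ring] at recursion
    refine mul_left_cancel₀ (by positivity : ((2 * m : ℕ) + 1 : ℝ) ≠ 0) (recursion.trans ?_)
    simp only [Nat.factorial_succ n, Nat.factorial_succ m, Nat.factorial_succ (2 * m + 1),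
      Nat.factorial_succ (2 * m)]
    push_cast
    field_simp
    ring

lemma integral_even_mul_exp {f : ℝ → ℝ} {h : ℝ} (hf : f.Even)
    (hfi : IntervalIntegrable f volume (-h) h) (L : ℝ) :
    ∫ t in -h..h, f t * Real.exp (L * t) = ∫ t in -h..h, f t * Real.cosh (L * t) := by
  have integral_sinh : ∫ t in -h..h, f t * Real.sinh (L * t) = 0 := by
    have reflect := integral_comp_neg (a := -h) (b := h) fun t ↦ f t * Real.sinh (L * t)
    simp only [hf _, neg_neg, mul_neg, Real.sinh_neg, intervalIntegral.integral_neg] at reflect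
    linarith
  simp only [← Real.cosh_add_sinh, mul_add]
  rw [intervalIntegral.integral_add (hfi.mul_continuousOn (by fun_prop))
    (hfi.mul_continuousOn (by fun_prop)), integral_sinh, add_zero]

end SymmetricInterval

section CauchyProduct

lemma hasSum_integral_tsum_mul_tsum {R : Type*} [NormedRing R] [NormedSpace ℝ R] [CompleteSpace R]
    {f g : ℕ → ℝ → R} {F G : ℕ → ℝ} {a b : ℝ}
    (hf : ∀ n, ContinuousOn (f n) (Set.uIcc a b)) (hg : ∀ n, ContinuousOn (g n) (Set.uIcc a b))
    (hfF : ∀ n, ∀ t ∈ Set.uIcc a b, ‖f n t‖ ≤ F n) (hgG : ∀ n, ∀ t ∈ Set.uIcc a b, ‖g n t‖ ≤ G n)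
    (hF : Summable F) (hG : Summable G) :
    HasSum (fun N ↦ ∑ p ∈ antidiagonal N, ∫ t in a..b, f p.1 t * g p.2 t)
      (∫ t in a..b, (∑' n, f n t) * ∑' n, g n t) := by
  have hF₀ (n : ℕ) : 0 ≤ F n := (norm_nonneg _).trans (hfF n a Set.left_mem_uIcc)
  have hG₀ (n : ℕ) : 0 ≤ G n := (norm_nonneg _).trans (hgG n a Set.left_mem_uIcc)
  have hfg (p : ℕ × ℕ) : ContinuousOn (fun t ↦ f p.1 t * g p.2 t) (Set.uIcc a b) :=
    (hf p.1).mul (hg p.2)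
  have hsum : HasSum (fun N ↦ ∫ t in a..b, ∑ p ∈ antidiagonal N, f p.1 t * g p.2 t)
      (∫ t in a..b, (∑' n, f n t) * ∑' n, g n t) := by
    refine intervalIntegral.hasSum_integral_of_dominated_convergence
      (fun N _ ↦ ∑ p ∈ antidiagonal N, F p.1 * G p.2) (fun N ↦ ?_) (fun N ↦ ?_) ?_ ?_ ?_
    · exact (continuousOn_finsetSum _ fun p _ ↦ hfg p).mono Set.uIoc_subset_uIcc
        |>.aestronglyMeasurable measurableSet_uIoc
    · refine .of_forall fun t ht ↦ norm_sum_le_of_le _ fun p _ ↦ (norm_mul_le _ _).trans ?_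
      gcongr
      exacts [hF₀ _, hfF _ _ (Set.uIoc_subset_uIcc ht), hgG _ _ (Set.uIoc_subset_uIcc ht)]
    · exact .of_forall fun t _ ↦
        summable_sum_mul_antidiagonal_of_summable_mul (hF.mul_of_nonneg hG hF₀ hG₀)
    · exact intervalIntegrable_const
    · refine .of_forall fun t ht ↦ ?_
      have hft : Summable fun n ↦ ‖f n t‖ :=
        .of_nonneg_of_le (fun _ ↦ norm_nonneg _) (hfF · t (Set.uIoc_subset_uIcc ht)) hF
      have hgt : Summable fun n ↦ ‖g n t‖ :=
        .of_nonneg_of_le (fun _ ↦ norm_nonneg _) (hgG · t (Set.uIoc_subset_uIcc ht)) hG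
      rw [tsum_mul_tsum_eq_tsum_sum_antidiagonal_of_summable_norm hft hgt]
      exact (summable_norm_sum_mul_antidiagonal_of_summable_norm hft hgt).of_norm.hasSum
  refine hsum.congr_fun fun N ↦ ?_
  exact (integral_finsetSum fun p _ ↦ (hfg p).intervalIntegrable).symm

lemma sq_le_sq_of_mem_uIcc_neg {h t : ℝ} (ht : t ∈ Set.uIcc (-h) h) : t ^ 2 ≤ h ^ 2 := by
  rcases Set.mem_uIcc.mp ht with ⟨hl, hr⟩ | ⟨hl, hr⟩ <;> nlinarith

lemma hasSum_integral_tsum_sq_sub_sq_pow_mul_cosh {a : ℕ → ℝ} {h : ℝ}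
    (ha : Summable fun n ↦ ‖a n‖ * (h ^ 2) ^ n) (L : ℝ) :
    HasSum (fun N : ℕ ↦ 2 * h ^ (2 * N + 1) * N ! / (2 * N + 1)! *
        ∑ p ∈ antidiagonal N, a p.1 * p.1 ! * 4 ^ p.1 * ((L ^ 2) ^ p.2 / p.2 !))
      (∫ t in -h..h, (∑' n, a n * (h ^ 2 - t ^ 2) ^ n) * Real.cosh (L * t)) := by
  have hsum : HasSum
      (fun N ↦ ∑ p ∈ antidiagonal N, ∫ t in -h..h,
        a p.1 * (h ^ 2 - t ^ 2) ^ p.1 * ((L * t) ^ (2 * p.2) / (2 * p.2)!))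
      (∫ t in -h..h, (∑' n, a n * (h ^ 2 - t ^ 2) ^ n) * Real.cosh (L * t)) := by
    simp only [Real.cosh_eq_tsum]
    refine hasSum_integral_tsum_mul_tsum (f := fun n t ↦ a n * (h ^ 2 - t ^ 2) ^ n)
      (g := fun m t ↦ (L * t) ^ (2 * m) / (2 * m)!) (by fun_prop) (by fun_prop) (fun n t ht ↦ ?_)
      (fun m t ht ↦ ?_) ha (Real.hasSum_cosh (L * h)).summable
    · have := sq_le_sq_of_mem_uIcc_neg ht
      rw [norm_mul, norm_pow, Real.norm_of_nonneg (by linarith : 0 ≤ h ^ 2 - t ^ 2)]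
      gcongr
      linarith [sq_nonneg t]
    · simp only [pow_mul, mul_pow]
      rw [Real.norm_of_nonneg (by positivity)]
      gcongr _ * ?_ ^ m / _
      exact sq_le_sq_of_mem_uIcc_neg ht
  refine hsum.congr_fun fun N ↦ ?_
  rw [mul_sum]
  refine sum_congr rfl fun p hp ↦ ?_
  obtain rfl := mem_antidiagonal.mp hp
  have hterm (t : ℝ) : a p.1 * (h ^ 2 - t ^ 2) ^ p.1 * ((L * t) ^ (2 * p.2) / (2 * p.2)!) =
      a p.1 * (L ^ 2) ^ p.2 / (2 * p.2)! * ((h ^ 2 - t ^ 2) ^ p.1 * t ^ (2 * p.2)) := by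
    ring
  simp only [hterm, intervalIntegral.integral_const_mul, integral_sq_sub_sq_pow_mul_pow_two_mul]
  field_simp

end CauchyProduct

/-- The Bessel–Clifford function of integer order `k`, in the normalization without signs:
for `w > 0` it is `I_k(2√w) / √w ^ k`, but as a power series in `w` it also makes sense at `w = 0`
and for negative `w`. It separates the two Bessel terms of `cbinom`. -/
noncomputable def besselClifford (k : ℕ) (w : ℝ) : ℝ :=
  ∑' n : ℕ, (n ! * (n + k)! : ℝ)⁻¹ * w ^ n

lemma summable_norm_besselClifford_coeff_mul_pow (k : ℕ) {r : ℝ} (hr : 0 ≤ r) :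
    Summable fun n : ℕ ↦ ‖(n ! * (n + k)! : ℝ)⁻¹‖ * r ^ n := by
  refine .of_nonneg_of_le (fun n ↦ by positivity) (fun n ↦ ?_) (Real.summable_pow_div_factorial r)
  have hfact : (1 : ℝ) ≤ (n + k)! := mod_cast (n + k).factorial_pos
  rw [Real.norm_of_nonneg (by positivity), inv_mul_eq_div]
  gcongr
  exact le_mul_of_one_le_right (by positivity) hfact

lemma summable_besselClifford (k : ℕ) (w : ℝ) :
    Summable fun n : ℕ ↦ (n ! * (n + k)! : ℝ)⁻¹ * w ^ n :=
  .of_norm <| by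
    simpa only [norm_mul, norm_pow] using
      summable_norm_besselClifford_coeff_mul_pow k (norm_nonneg w)

@[fun_prop]
lemma continuous_besselClifford (k : ℕ) : Continuous (besselClifford k) := by
  refine continuous_iff_continuousAt.mpr fun w₀ ↦ ?_
  have hr : 0 ≤ ‖w₀‖ + 1 := by positivity
  refine ContinuousOn.continuousAt (s := Metric.closedBall 0 (‖w₀‖ + 1)) ?_
    (Metric.closedBall_mem_nhds_of_mem (by simp))
  refine continuousOn_tsum (fun n ↦ by fun_prop) (summable_norm_besselClifford_coeff_mul_pow k hr)
    fun n w hw ↦ ?_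
  rw [norm_mul, norm_pow]
  gcongr
  exact mem_closedBall_zero_iff.mp hw

lemma integral_besselClifford_mul_exp_eq_mul_cosh (k : ℕ) (h L : ℝ) :
    ∫ t in -h..h, besselClifford k (h ^ 2 - t ^ 2) * Real.exp (L * t) =
      ∫ t in -h..h, besselClifford k (h ^ 2 - t ^ 2) * Real.cosh (L * t) :=
  integral_even_mul_exp (fun t ↦ by rw [neg_sq])
    (Continuous.intervalIntegrable (by fun_prop) _ _) L

theorem integral_besselClifford_zero_mul_exp (h L : ℝ) :
    ∫ t in -h..h, besselClifford 0 (h ^ 2 - t ^ 2) * Real.exp (L * t) =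
      2 / √(4 + L ^ 2) * Real.sinh (h * √(4 + L ^ 2)) := by
  have hR_sq : √(4 + L ^ 2) ^ 2 = 4 + L ^ 2 := Real.sq_sqrt (by positivity)
  rw [integral_besselClifford_mul_exp_eq_mul_cosh]
  refine (hasSum_integral_tsum_sq_sub_sq_pow_mul_cosh
    (summable_norm_besselClifford_coeff_mul_pow 0 (sq_nonneg h)) L).unique ?_
  refine ((Real.hasSum_sinh (h * √(4 + L ^ 2))).mul_left (2 / √(4 + L ^ 2))).congr_fun fun N ↦ ?_
  have hcoeff (p : ℕ × ℕ) :
      (p.1 ! * (p.1 + 0)! : ℝ)⁻¹ * p.1 ! * 4 ^ p.1 * ((L ^ 2) ^ p.2 / p.2 !) =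
        4 ^ p.1 / p.1 ! * ((L ^ 2) ^ p.2 / p.2 !) := by
    rw [add_zero]
    field_simp
  simp only [hcoeff, sum_antidiagonal_pow_div_factorial_mul]
  rw [mul_pow h, pow_succ √(4 + L ^ 2), pow_mul √(4 + L ^ 2), hR_sq]
  field_simp

theorem mul_integral_besselClifford_one_mul_exp (h L : ℝ) :
    h * ∫ t in -h..h, besselClifford 1 (h ^ 2 - t ^ 2) * Real.exp (L * t) =
      Real.cosh (h * √(4 + L ^ 2)) - Real.cosh (h * L) := by
  have hR_sq : √(4 + L ^ 2) ^ 2 = 4 + L ^ 2 := Real.sq_sqrt (by positivity)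
  rw [integral_besselClifford_mul_exp_eq_mul_cosh]
  refine ((hasSum_integral_tsum_sq_sub_sq_pow_mul_cosh
    (summable_norm_besselClifford_coeff_mul_pow 1 (sq_nonneg h)) L).mul_left h).unique ?_
  -- The constant terms of the two `cosh` series cancel, which leaves the terms of index `N + 1`.
  have hcosh := (hasSum_nat_add_iff' 1).mpr
    ((Real.hasSum_cosh (h * √(4 + L ^ 2))).sub (Real.hasSum_cosh (h * L)))
  simp only [range_one, sum_singleton, mul_zero, pow_zero, sub_self, sub_zero] at hcosh
  refine hcosh.congr_fun fun N ↦ ?_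
  have hcoeff (p : ℕ × ℕ) :
      (p.1 ! * (p.1 + 1)! : ℝ)⁻¹ * p.1 ! * 4 ^ p.1 * ((L ^ 2) ^ p.2 / p.2 !) =
        4⁻¹ * (4 ^ (p.1 + 1) / (p.1 + 1)! * ((L ^ 2) ^ p.2 / p.2 !)) := by
    field_simp
    ring
  simp only [hcoeff, ← mul_sum, sum_antidiagonal_pow_succ_div_factorial_mul]
  rw [mul_pow h, mul_pow h, pow_mul √(4 + L ^ 2), pow_mul L, hR_sq,
    show 2 * (N + 1) = 2 * N + 1 + 1 by ring, Nat.factorial_succ (2 * N + 1), Nat.factorial_succ N]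
  push_cast
  field_simp
  ring

lemma cbinom_eq_besselClifford (x s : ℝ) :
    cbinom x s = 2 * besselClifford 0 (s * (x - s)) + x * besselClifford 1 (s * (x - s)) := by
  simp only [cbinom, besselClifford, ← tsum_mul_left]
  rw [← ((summable_besselClifford 0 _).mul_left 2).tsum_add
    ((summable_besselClifford 1 _).mul_left x)]
  refine tsum_congr fun n ↦ ?_
  rw [add_zero]
  ring

theorem integral_cbinom_mul_exp (x L : ℝ) :
    ∫ s in (0 : ℝ)..x, cbinom x s * Real.exp (L * s) =
      2 * Real.exp (L * (x / 2)) *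
        (Real.cosh (x / 2 * √(4 + L ^ 2)) - Real.cosh (x / 2 * L) +
          2 / √(4 + L ^ 2) * Real.sinh (x / 2 * √(4 + L ^ 2))) := by
  obtain ⟨h, rfl⟩ : ∃ h, x = 2 * h := ⟨x / 2, by ring⟩
  rw [mul_div_cancel_left₀ h two_ne_zero]
  have hcentred (t : ℝ) : cbinom (2 * h) (t + h) * Real.exp (L * (t + h)) =
      2 * Real.exp (L * h) * (besselClifford 0 (h ^ 2 - t ^ 2) * Real.exp (L * t) +
        h * (besselClifford 1 (h ^ 2 - t ^ 2) * Real.exp (L * t))) := by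
    rw [cbinom_eq_besselClifford, show (t + h) * (2 * h - (t + h)) = h ^ 2 - t ^ 2 by ring,
      mul_add L, Real.exp_add]
    ring
  calc ∫ s in (0 : ℝ)..2 * h, cbinom (2 * h) s * Real.exp (L * s)
      = ∫ t in -h..h, cbinom (2 * h) (t + h) * Real.exp (L * (t + h)) := by
        rw [integral_comp_add_right fun s ↦ cbinom (2 * h) s * Real.exp (L * s),
          neg_add_cancel, ← two_mul]
    _ = 2 * Real.exp (L * h) *
          ((∫ t in -h..h, besselClifford 0 (h ^ 2 - t ^ 2) * Real.exp (L * t)) +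
            h * ∫ t in -h..h, besselClifford 1 (h ^ 2 - t ^ 2) * Real.exp (L * t)) := by
        simp only [hcentred]
        rw [intervalIntegral.integral_const_mul, intervalIntegral.integral_add
          (Continuous.intervalIntegrable (by fun_prop) _ _)
          (Continuous.intervalIntegrable (by fun_prop) _ _), intervalIntegral.integral_const_mul]
    _ = _ := by
        rw [integral_besselClifford_zero_mul_exp, mul_integral_besselClifford_one_mul_exp, add_comm]

theorem cbinom_exp_integral_general (x u : ℝ) {α : ℝ} (hα : 0 < α) :
    (∫ s in (0 : ℝ)..x, cbinom x s * α ^ s * Real.exp (u * s)) =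
      2 * α ^ (x / 2) * Real.exp (u * x / 2) *
        (Real.cosh (x / 2 * √(4 + (u + Real.log α) ^ 2)) -
          Real.cosh (x / 2 * (u + Real.log α)) +
          2 / √(4 + (u + Real.log α) ^ 2) *
            Real.sinh (x / 2 * √(4 + (u + Real.log α) ^ 2))) := by
  have hexp (s : ℝ) : α ^ s * Real.exp (u * s) = Real.exp ((u + Real.log α) * s) := by
    rw [Real.rpow_def_of_pos hα, ← Real.exp_add]
    ring_nf
  simp only [mul_assoc (cbinom x _), hexp]
  rw [integral_cbinom_mul_exp, ← hexp, mul_div_assoc u, ← mul_assoc 2]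

theorem cbinom_exp_integral (x α u : ℝ) (hx : 0 ≤ x) (hα : 0 < α) :
    (∫ s in (0 : ℝ)..x, cbinom x s * α ^ s * Real.exp (u * s)) =
      2 * α ^ (x / 2) * Real.exp (u * x / 2) *
        (Real.cosh (x / 2 * Real.sqrt (4 + (u + Real.log α) ^ 2)) -
          Real.cosh (x / 2 * (u + Real.log α)) +
          2 / Real.sqrt (4 + (u + Real.log α) ^ 2) *
            Real.sinh (x / 2 * Real.sqrt (4 + (u + Real.log α) ^ 2))) :=
  cbinom_exp_integral_general x u hα
end

section
/- For all real numbers s₁, s₂ ≥ 0 and x ≥ 0, letting s̄ = s₁ + s₂ and h(t) = {x + t choose t}, one has ∫_{0}^{x} f_{s₁}(u) f_{s₂}(x−u) du + f_{s₁}(x) + f_{s₂}(x) = h(s̄) + 2 h′(s̄) + h″(s̄), where h′ and h″ are the first and second derivatives of h in the variable t and f_s(u) = {u+s choose s}. -/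
/-!
The Borel transform `X ^ (n + 1) ↦ x ^ n / n!` turns products of power series into convolutions,
the constant term `1` playing the role of the Dirac mass at `0`. The function `x ↦ {x + t choose t}`
is the Borel transform of `(1 + X) ^ 2 * exp (t X)`, whose constant term is `1`. Hence the left-hand
side of the identity is the Borel transform of the product of these series for `t = s₁` and
`t = s₂`, which is `(1 + X) ^ 2` times the series for `t = s₁ + s₂`. Multiplying by `X` amounts to
differentiating in `t`, so the additional factor acts as the differential operator `(1 + d/dt) ^ 2`.
-/

open Finset PowerSeries
open scoped Nat

theorem hasDerivAt_pow_succ_div_factorial {𝕜 : Type*} [NontriviallyNormedField 𝕜] [CharZero 𝕜]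
    (n : ℕ) (t : 𝕜) :
    HasDerivAt (fun t : 𝕜 => t ^ (n + 1) / ((n + 1)! : 𝕜)) (t ^ n / (n ! : 𝕜)) t := by
  refine ((hasDerivAt_pow (n + 1) t).div_const _).congr_deriv ?_
  have : (n ! : 𝕜) ≠ 0 := mod_cast n.factorial_ne_zero
  have : (n + 1 : 𝕜) ≠ 0 := mod_cast n.succ_ne_zero
  simp only [Nat.add_sub_cancel, Nat.factorial_succ, Nat.cast_mul, Nat.cast_add, Nat.cast_one]
  field_simp

theorem integral_pow_div_factorial_mul_sub_pow_div_factorial (x : ℝ) (j k : ℕ) :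
    ∫ u in (0 : ℝ)..x, u ^ j / (j ! : ℝ) * ((x - u) ^ k / (k ! : ℝ)) =
      x ^ (j + k + 1) / ((j + k + 1)! : ℝ) := by
  have hderiv (k : ℕ) (u : ℝ) : HasDerivAt (fun u => -((x - u) ^ (k + 1) / ((k + 1)! : ℝ)))
      ((x - u) ^ k / (k ! : ℝ)) u := by
    simpa using ((hasDerivAt_pow_succ_div_factorial k (x - u)).comp_const_sub x u).fun_neg
  induction j generalizing k with
  | zero =>
    have hprimitive := intervalIntegral.integral_eq_sub_of_hasDerivAt (fun u _ => hderiv k u)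
      (Continuous.intervalIntegrable (by fun_prop) 0 x)
    simpa using hprimitive
  | succ j ih =>
    have hparts := intervalIntegral.integral_mul_deriv_eq_deriv_mul
      (fun u _ => hasDerivAt_pow_succ_div_factorial j u) (fun u _ => hderiv k u)
      (Continuous.intervalIntegrable (by fun_prop) 0 x)
      (Continuous.intervalIntegrable (by fun_prop) 0 x)
    rw [hparts, add_right_comm j 1 k]
    simpa using! ih (k + 1)

theorem hasSum_sum_antidiagonal {A M : Type*} [AddMonoid A] [HasAntidiagonal A]
    [AddCommMonoid M] [TopologicalSpace M] [ContinuousAdd M] [RegularSpace M]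
    {f : A × A → M} {s : M} (hf : HasSum f s) :
    HasSum (fun n => ∑ p ∈ antidiagonal n, f p) s :=
  (HasAntidiagonal.sigmaAntidiagonalEquivProd.hasSum_iff.mpr hf).sigma
    fun n => (antidiagonal n).hasSum f

theorem coeff_add_two_mul {R : Type*} [CommSemiring R] (A B : R⟦X⟧) (n : ℕ) :
    coeff (n + 2) (A * B) =
      (∑ p ∈ antidiagonal n, coeff (p.1 + 1) A * coeff (p.2 + 1) B) +
        constantCoeff B * coeff (n + 2) A + constantCoeff A * coeff (n + 2) B := by
  rw [coeff_mul, Nat.antidiagonal_succ_succ']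
  simp only [sum_cons, sum_map, Function.Embedding.prodMap, Function.Embedding.coeFn_mk, Prod.map,
    coeff_zero_eq_constantCoeff]
  ring

/-- The `n`-th term of the series defining `borelTransform A x`. -/
noncomputable def borelTerm (A : ℝ⟦X⟧) (x : ℝ) (n : ℕ) : ℝ :=
  coeff (n + 1) A * (x ^ n / (n ! : ℝ))

/-- The Borel transform of a formal power series, in the convention `X ^ (n + 1) ↦ x ^ n / n!`
under which products become convolutions on `[0, x]`. The constant term, whose image would be a
multiple of the Dirac mass at `0`, is dropped. -/
noncomputable def borelTransform (A : ℝ⟦X⟧) (x : ℝ) : ℝ :=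
  ∑' n, borelTerm A x n

section BorelTransform

variable {A B : ℝ⟦X⟧} {u x : ℝ}

theorem norm_borelTerm_le_of_abs_le (h : |u| ≤ |x|) (n : ℕ) :
    ‖borelTerm A u n‖ ≤ ‖borelTerm A x n‖ := by
  simp only [borelTerm, norm_mul, norm_div, norm_pow, Real.norm_eq_abs]
  gcongr

theorem summable_borelTerm_of_abs_le (hA : Summable (borelTerm A x)) (h : |u| ≤ |x|) :
    Summable (borelTerm A u) :=
  hA.norm.of_norm_bounded (norm_borelTerm_le_of_abs_le h)

theorem hasSum_borelTerm_mul_borelTerm {y : ℝ} (hA : Summable (borelTerm A x))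
    (hB : Summable (borelTerm B y)) :
    HasSum (fun p : ℕ × ℕ => borelTerm A x p.1 * borelTerm B y p.2)
      (borelTransform A x * borelTransform B y) :=
  hA.hasSum.mul hB.hasSum (summable_mul_of_summable_norm hA.norm hB.norm)

theorem integral_borelTerm_mul_borelTerm (A B : ℝ⟦X⟧) (x : ℝ) (p : ℕ × ℕ) :
    ∫ u in (0 : ℝ)..x, borelTerm A u p.1 * borelTerm B (x - u) p.2 =
      coeff (p.1 + 1) A * coeff (p.2 + 1) B *
        (x ^ (p.1 + p.2 + 1) / ((p.1 + p.2 + 1)! : ℝ)) := by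
  rw [← integral_pow_div_factorial_mul_sub_pow_div_factorial, ← intervalIntegral.integral_const_mul]
  simp only [borelTerm, mul_mul_mul_comm]

theorem sum_integral_borelTerm_mul_borelTerm (A B : ℝ⟦X⟧) (x : ℝ) (n : ℕ) :
    ∑ p ∈ antidiagonal n, ∫ u in (0 : ℝ)..x, borelTerm A u p.1 * borelTerm B (x - u) p.2 =
      (∑ p ∈ antidiagonal n, coeff (p.1 + 1) A * coeff (p.2 + 1) B) *
        (x ^ (n + 1) / ((n + 1)! : ℝ)) := by
  rw [sum_mul]
  refine sum_congr rfl fun p hp => ?_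
  rw [integral_borelTerm_mul_borelTerm, mem_antidiagonal.mp hp]

theorem hasSum_integral_borelTransform_mul_borelTransform (hA : Summable (borelTerm A x))
    (hB : Summable (borelTerm B x)) :
    HasSum (fun p : ℕ × ℕ => ∫ u in (0 : ℝ)..x, borelTerm A u p.1 * borelTerm B (x - u) p.2)
      (∫ u in (0 : ℝ)..x, borelTransform A u * borelTransform B (x - u)) := by
  have habs {u : ℝ} (hu : u ∈ Set.uIoc 0 x) : |u| ≤ |x| := by
    simpa using Set.abs_sub_left_of_mem_uIcc (Set.uIoc_subset_uIcc hu)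
  have habs_sub {u : ℝ} (hu : u ∈ Set.uIoc 0 x) : |x - u| ≤ |x| := by
    simpa using Set.abs_sub_right_of_mem_uIcc (Set.uIoc_subset_uIcc hu)
  refine intervalIntegral.hasSum_integral_of_dominated_convergence
    (fun p _ => ‖borelTerm A x p.1‖ * ‖borelTerm B x p.2‖) (fun p => ?_) (fun p => ?_) ?_ ?_ ?_
  · unfold borelTerm
    exact Continuous.aestronglyMeasurable (by fun_prop)
  · filter_upwards with u hu
    rw [norm_mul]
    gcongr
    · exact norm_borelTerm_le_of_abs_le (habs hu) _
    · exact norm_borelTerm_le_of_abs_le (habs_sub hu) _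
  · filter_upwards with u _
    exact hA.norm.mul_of_nonneg hB.norm (fun _ => norm_nonneg _) (fun _ => norm_nonneg _)
  · exact intervalIntegrable_const
  · filter_upwards with u hu
    exact hasSum_borelTerm_mul_borelTerm (summable_borelTerm_of_abs_le hA (habs hu))
      (summable_borelTerm_of_abs_le hB (habs_sub hu))

theorem borelTerm_mul_zero (A B : ℝ⟦X⟧) (x : ℝ) :
    borelTerm (A * B) x 0 =
      constantCoeff B * borelTerm A x 0 + constantCoeff A * borelTerm B x 0 := by
  simp [borelTerm, coeff_one_mul, mul_comm]

theorem borelTerm_mul_succ (A B : ℝ⟦X⟧) (x : ℝ) (n : ℕ) :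
    borelTerm (A * B) x (n + 1) =
      (∑ p ∈ antidiagonal n, ∫ u in (0 : ℝ)..x, borelTerm A u p.1 * borelTerm B (x - u) p.2) +
        constantCoeff B * borelTerm A x (n + 1) + constantCoeff A * borelTerm B x (n + 1) := by
  rw [sum_integral_borelTerm_mul_borelTerm]
  simp only [borelTerm, add_assoc, Nat.reduceAdd, coeff_add_two_mul]
  ring

theorem integral_borelTransform_mul_borelTransform (hA : Summable (borelTerm A x))
    (hB : Summable (borelTerm B x)) :
    (∫ u in (0 : ℝ)..x, borelTransform A u * borelTransform B (x - u)) +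
        constantCoeff B * borelTransform A x + constantCoeff A * borelTransform B x =
      borelTransform (A * B) x := by
  have hconv := hasSum_sum_antidiagonal (hasSum_integral_borelTransform_mul_borelTransform hA hB)
  have htailA := ((hasSum_nat_add_iff' 1).mpr hA.hasSum).mul_left (constantCoeff B)
  have htailB := ((hasSum_nat_add_iff' 1).mpr hB.hasSum).mul_left (constantCoeff A)
  have hsum := (((hconv.add htailA).add htailB).congr_fun (borelTerm_mul_succ A B x)).zero_add
  refine (hsum.tsum_eq.trans ?_).symm
  simp only [borelTerm_mul_zero, sum_range_one, borelTransform]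
  ring

theorem summable_borelTerm_X_mul (hA : Summable (borelTerm A x)) :
    Summable (borelTerm (X * A) x) := by
  have hsucc (n : ℕ) : borelTerm (X * A) x (n + 1) = x / (n + 1) * borelTerm A x n := by
    simp only [borelTerm, coeff_succ_X_mul, Nat.factorial_succ, Nat.cast_mul, Nat.cast_add,
      Nat.cast_one]
    field_simp
    ring
  refine (summable_nat_add_iff 1).mp ((hA.norm.mul_left |x|).of_norm_bounded fun n => ?_)
  rw [hsucc, norm_mul, norm_div, Real.norm_eq_abs]
  gcongr
  refine div_le_self (abs_nonneg x) ?_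
  rw [Real.norm_of_nonneg (by positivity)]
  linarith [n.cast_nonneg (α := ℝ)]

theorem hasSum_borelTransform_X_mul_X_mul (hA : Summable (borelTerm A x)) :
    HasSum (fun n => coeff n A * (x ^ (n + 1) / ((n + 1)! : ℝ)))
      (borelTransform (X * (X * A)) x) := by
  have hsum := summable_borelTerm_X_mul (summable_borelTerm_X_mul hA)
  simpa [borelTerm, borelTransform, coeff_succ_X_mul] using
    (hasSum_nat_add_iff' 1).mpr hsum.hasSum

theorem borelTransform_one_add_X_sq_mul (hA : Summable (borelTerm A x)) :
    borelTransform ((1 + X) ^ 2 * A) x =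
      borelTransform A x + 2 * borelTransform (X * A) x + borelTransform (X * (X * A)) x := by
  have hXA := summable_borelTerm_X_mul hA
  have hterm (n : ℕ) : borelTerm ((1 + X) ^ 2 * A) x n =
      borelTerm A x n + 2 * borelTerm (X * A) x n + borelTerm (X * (X * A)) x n := by
    rw [show (1 + X) ^ 2 * A = A + (X * A + X * A) + X * (X * A) by ring]
    simp only [borelTerm, map_add]
    ring
  simp only [borelTransform, hterm]
  rw [(hA.add (hXA.mul_left 2)).tsum_add (summable_borelTerm_X_mul hXA),
    hA.tsum_add (hXA.mul_left 2), tsum_mul_left]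

end BorelTransform

/-- Power series with bounded coefficients: a class of series with everywhere convergent Borel
transform that is stable under multiplication by `X` and by `exp (t X)`. -/
def HasBoundedCoeff (A : ℝ⟦X⟧) : Prop :=
  ∃ M, ∀ n, |coeff n A| ≤ M

namespace HasBoundedCoeff

variable {A B : ℝ⟦X⟧}

theorem one : HasBoundedCoeff 1 := by
  refine ⟨1, fun n => ?_⟩
  rw [coeff_one]
  split_ifs <;> simp

theorem add (hA : HasBoundedCoeff A) (hB : HasBoundedCoeff B) : HasBoundedCoeff (A + B) := by
  obtain ⟨M, hM⟩ := hA
  obtain ⟨N, hN⟩ := hB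
  exact ⟨M + N, fun n => (abs_add_le _ _).trans (add_le_add (hM n) (hN n))⟩

theorem X_mul (hA : HasBoundedCoeff A) : HasBoundedCoeff (X * A) := by
  obtain ⟨M, hM⟩ := hA
  refine ⟨M, fun n => ?_⟩
  cases n with
  | zero => simpa using (abs_nonneg _).trans (hM 0)
  | succ n => simpa [coeff_succ_X_mul] using hM n

theorem summable_borelTerm (hA : HasBoundedCoeff A) (x : ℝ) : Summable (borelTerm A x) := by
  obtain ⟨M, hM⟩ := hA
  refine ((Real.summable_pow_div_factorial x).norm.mul_left M).of_norm_bounded fun n => ?_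
  rw [borelTerm, norm_mul]
  exact mul_le_mul_of_nonneg_right (hM _) (norm_nonneg _)

end HasBoundedCoeff

section Exponential

theorem coeff_rescale_exp {K : Type*} [Field K] [CharZero K] (n : ℕ) (t : K) :
    coeff n (rescale t (exp K)) = t ^ n / (n ! : K) := by
  simp [coeff_rescale, coeff_exp, div_eq_mul_inv]

theorem constantCoeff_rescale_exp {K : Type*} [Field K] [CharZero K] (t : K) :
    constantCoeff (rescale t (exp K)) = 1 := by
  rw [← coeff_zero_eq_constantCoeff_apply, coeff_rescale_exp]
  simp

theorem hasDerivAt_coeff_rescale_exp {𝕜 : Type*} [NontriviallyNormedField 𝕜] [CharZero 𝕜]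
    (n : ℕ) (t : 𝕜) :
    HasDerivAt (fun t => coeff n (rescale t (exp 𝕜))) (coeff n (X * rescale t (exp 𝕜))) t := by
  cases n with
  | zero => simpa using hasDerivAt_const t (1 : 𝕜)
  | succ n =>
    simpa only [coeff_succ_X_mul, coeff_rescale_exp] using hasDerivAt_pow_succ_div_factorial n t

theorem hasDerivAt_coeff_mul_rescale_exp {𝕜 : Type*} [NontriviallyNormedField 𝕜] [CharZero 𝕜]
    (P : 𝕜⟦X⟧) (n : ℕ) (t : 𝕜) :
    HasDerivAt (fun t => coeff n (P * rescale t (exp 𝕜)))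
      (coeff n (X * P * rescale t (exp 𝕜))) t := by
  rw [mul_comm X P, mul_assoc]
  simp only [coeff_mul _ P]
  exact HasDerivAt.fun_sum fun p _ => (hasDerivAt_coeff_rescale_exp p.2 t).const_mul _

variable {P : ℝ⟦X⟧}

theorem abs_coeff_mul_rescale_exp_le {M : ℝ} (hP : ∀ n, |coeff n P| ≤ M) (n : ℕ) (t : ℝ) :
    |coeff n (P * rescale t (exp ℝ))| ≤ M * Real.exp |t| := by
  have hM : 0 ≤ M := (abs_nonneg _).trans (hP 0)
  calc |coeff n (P * rescale t (exp ℝ))|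
      = |∑ k ∈ range (n + 1), coeff (n - k) P * (t ^ k / (k ! : ℝ))| := by
        rw [mul_comm, coeff_mul, Nat.sum_antidiagonal_eq_sum_range_succ_mk]
        simp only [coeff_rescale_exp, mul_comm]
    _ ≤ ∑ k ∈ range (n + 1), M * (|t| ^ k / (k ! : ℝ)) := by
        refine (abs_sum_le_sum_abs _ _).trans (sum_le_sum fun k _ => ?_)
        rw [abs_mul, abs_div, abs_pow, Nat.abs_cast]
        gcongr
        exact hP _
    _ ≤ M * Real.exp |t| := by
        rw [← mul_sum]
        gcongr
        exact Real.sum_le_exp_of_nonneg (abs_nonneg t) _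

theorem HasBoundedCoeff.mul_rescale_exp (hP : HasBoundedCoeff P) (t : ℝ) :
    HasBoundedCoeff (P * rescale t (exp ℝ)) := by
  obtain ⟨M, hM⟩ := hP
  exact ⟨M * Real.exp |t|, fun n => abs_coeff_mul_rescale_exp_le hM n t⟩

theorem hasDerivAt_borelTransform_mul_rescale_exp (hP : HasBoundedCoeff P) (x t : ℝ) :
    HasDerivAt (fun t => borelTransform (P * rescale t (exp ℝ)) x)
      (borelTransform (X * P * rescale t (exp ℝ)) x) t := by
  obtain ⟨M, hM⟩ := hP.X_mul
  have hbound : Summable fun n => M * Real.exp (|t| + 1) * ‖x ^ n / (n ! : ℝ)‖ :=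
    (Real.summable_pow_div_factorial x).norm.mul_left _
  refine hasDerivAt_tsum_of_isPreconnected hbound Metric.isOpen_ball
    (convex_ball (0 : ℝ) (|t| + 1)).isPreconnected
    (fun n s _ => (hasDerivAt_coeff_mul_rescale_exp P (n + 1) s).mul_const _) (fun n s hs => ?_)
    (y₀ := t) (by simp) ((hP.mul_rescale_exp t).summable_borelTerm x) (by simp)
  have hM₀ : 0 ≤ M := (abs_nonneg _).trans (hM 0)
  have hs' : |s| ≤ |t| + 1 := (mem_ball_zero_iff.mp hs).le
  rw [norm_mul]
  gcongr
  exact (abs_coeff_mul_rescale_exp_le hM _ s).trans (by gcongr)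

theorem deriv_borelTransform_mul_rescale_exp (hP : HasBoundedCoeff P) (x : ℝ) :
    deriv (fun t => borelTransform (P * rescale t (exp ℝ)) x) =
      fun t => borelTransform (X * P * rescale t (exp ℝ)) x :=
  funext fun t => (hasDerivAt_borelTransform_mul_rescale_exp hP x t).deriv

end Exponential

theorem hasBoundedCoeff_one_add_X_sq : HasBoundedCoeff ((1 + X) ^ 2) := by
  have hlinear : HasBoundedCoeff (1 + X * 1) := .add .one (.X_mul .one)
  convert hlinear.add hlinear.X_mul using 1
  ring

theorem cbinom_add_self_eq_borelTransform (x t : ℝ) :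
    cbinom (x + t) t = borelTransform ((1 + X) ^ 2 * rescale t (exp ℝ)) x := by
  have hexp : Summable (borelTerm (rescale t (exp ℝ)) x) := by
    simpa only [one_mul] using (HasBoundedCoeff.one.mul_rescale_exp t).summable_borelTerm x
  have hXexp := summable_borelTerm_X_mul hexp
  rw [borelTransform_one_add_X_sq_mul hexp]
  refine HasSum.tsum_eq (((hexp.hasSum.add (hXexp.hasSum.mul_left 2)).add
    (hasSum_borelTransform_X_mul_X_mul hexp)).congr_fun fun n => ?_)
  simp only [borelTerm, coeff_succ_X_mul, coeff_rescale_exp, add_sub_cancel_right, mul_pow]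
  field_simp
  ring

theorem continuous_chu_vandermonde_deriv_general (s₁ s₂ x : ℝ) :
    (∫ u in (0 : ℝ)..x, cbinom (u + s₁) s₁ * cbinom ((x - u) + s₂) s₂) +
        cbinom (x + s₁) s₁ + cbinom (x + s₂) s₂ =
      cbinom (x + (s₁ + s₂)) (s₁ + s₂) +
        2 * deriv (fun t : ℝ => cbinom (x + t) t) (s₁ + s₂) +
        deriv (deriv (fun t : ℝ => cbinom (x + t) t)) (s₁ + s₂) := by
  have hP := hasBoundedCoeff_one_add_X_sq
  simp only [cbinom_add_self_eq_borelTransform, deriv_borelTransform_mul_rescale_exp hP,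
    deriv_borelTransform_mul_rescale_exp hP.X_mul]
  have hsummable (t : ℝ) := (hP.mul_rescale_exp t).summable_borelTerm x
  calc _ = borelTransform
        ((1 + X) ^ 2 * rescale s₁ (exp ℝ) * ((1 + X) ^ 2 * rescale s₂ (exp ℝ))) x := by
        simpa [constantCoeff_rescale_exp] using
          integral_borelTransform_mul_borelTransform (hsummable s₁) (hsummable s₂)
    _ = borelTransform ((1 + X) ^ 2 * ((1 + X) ^ 2 * rescale (s₁ + s₂) (exp ℝ))) x := by
        rw [← exp_mul_exp_eq_exp_add, mul_mul_mul_comm, mul_assoc]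
    _ = _ := by
        simpa only [mul_assoc] using borelTransform_one_add_X_sq_mul (hsummable (s₁ + s₂))

theorem continuous_chu_vandermonde_deriv (s₁ s₂ x : ℝ) (hs₁ : 0 ≤ s₁) (hs₂ : 0 ≤ s₂)
    (hx : 0 ≤ x) :
    (∫ u in (0 : ℝ)..x, cbinom (u + s₁) s₁ * cbinom ((x - u) + s₂) s₂) +
        cbinom (x + s₁) s₁ + cbinom (x + s₂) s₂ =
      cbinom (x + (s₁ + s₂)) (s₁ + s₂) +
        2 * deriv (fun t : ℝ => cbinom (x + t) t) (s₁ + s₂) +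
        deriv (deriv (fun t : ℝ => cbinom (x + t) t)) (s₁ + s₂) :=
  continuous_chu_vandermonde_deriv_general s₁ s₂ x
end

section
/- For every real number p > 2, the Laplace transform of the continuous central binomial coefficient satisfies ∫_{0}^{∞} e^{−ps} {2s choose s} ds = √((p+2)/(p−2)) − 1. -/
/-!
The central coefficient is `{2s choose s} = 2 I₀(2s) + 2 I₁(2s)`. Transforming the power series of
`I_ν` term by term replaces `sᵏ` by `k! / p ^ (k + 1)`, so the Laplace transform of `I_ν(a s)` is
a series in `a / (2p)` with coefficients `(2n + ν).choose n`. For `ν = 0, 1` these are central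
binomial coefficients, whose generating function is `1 / √(1 - 4x)`.
-/

open MeasureTheory Set Real
open scoped Nat

section CentralBinom

lemma factorial_mul_centralBinom_eq_smeval_descPochhammer {𝕜 : Type*} [Field 𝕜] [CharZero 𝕜]
    (n : ℕ) : (n ! * n.centralBinom : 𝕜) =
      (descPochhammer ℤ n).smeval (-(1 / 2) : 𝕜) * (-4) ^ n := by
  induction n with
  | zero => simp
  | succ k ih =>
    have centralBinom_succ :
        ((k : 𝕜) + 1) * (k + 1).centralBinom = 2 * (2 * k + 1) * k.centralBinom := by
      exact_mod_cast Nat.succ_mul_centralBinom_succ k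
    simp only [descPochhammer_succ_right, Polynomial.smeval_mul, Nat.factorial_succ,
      Polynomial.smeval_sub, Polynomial.smeval_X, Polynomial.smeval_natCast,
      pow_zero, nsmul_eq_mul, mul_one, Nat.cast_mul, Nat.cast_succ, pow_succ]
    linear_combination (2 * (2 * (k : 𝕜) + 1)) * ih + (k ! : 𝕜) * centralBinom_succ

lemma choose_neg_half_mul_neg_four_pow {𝕜 : Type*} [Field 𝕜] [CharZero 𝕜] (n : ℕ) :
    Ring.choose (-(1 / 2) : 𝕜) n * (-4) ^ n = n.centralBinom := by
  have h := factorial_mul_centralBinom_eq_smeval_descPochhammer (𝕜 := 𝕜) n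
  rw [Ring.descPochhammer_eq_factorial_smul_choose, nsmul_eq_mul, mul_assoc] at h
  exact (mul_left_cancel₀ (Nat.cast_ne_zero.2 n.factorial_ne_zero) h).symm

lemma hasSum_centralBinom_mul_pow {x : ℝ} (hx : |x| < 1 / 4) :
    HasSum (fun n : ℕ ↦ n.centralBinom * x ^ n) (√(1 - 4 * x))⁻¹ := by
  have mem_ball : -4 * x ∈ Metric.eball (0 : ℝ) 1 := by
    rw [Metric.mem_eball, edist_zero_right, ← ofReal_norm, ENNReal.ofReal_lt_one, norm_mul,
      norm_neg, Real.norm_ofNat, norm_eq_abs]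
    linarith
  convert! one_add_rpow_hasFPowerSeriesOnBall_zero (a := -(1 / 2)) |>.hasSum mem_ball using 1
  · funext n
    rw [binomialSeries_apply, ← choose_neg_half_mul_neg_four_pow]
    simp only [List.ofFn_const, List.prod_replicate, smul_eq_mul, mul_pow, mul_assoc]
  · rw [zero_add, sqrt_eq_rpow, ← rpow_neg (by linarith [(abs_lt.1 hx).2])]
    ring_nf

lemma hasSum_centralBinom_mul_div_pow {a p : ℝ} (h : |a| < p) :
    HasSum (fun n : ℕ ↦ n.centralBinom * (a / (2 * p)) ^ (2 * n)) (p / √(p ^ 2 - a ^ 2)) := by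
  have hp : 0 < p := (abs_nonneg a).trans_lt h
  have abs_lt_quarter : |(a / (2 * p)) ^ 2| < 1 / 4 := by
    rw [abs_of_nonneg (by positivity), div_pow, div_lt_iff₀ (by positivity)]
    linarith [sq_lt_sq.2 (h.trans_le (le_abs_self p))]
  have sqrt_eq : √(1 - 4 * (a / (2 * p)) ^ 2) = √(p ^ 2 - a ^ 2) / p := by
    rw [show 1 - 4 * (a / (2 * p)) ^ 2 = (p ^ 2 - a ^ 2) / p ^ 2 by field_simp; ring,
      sqrt_div' _ (by positivity), sqrt_sq hp.le]
  simpa only [sqrt_eq, inv_div, ← pow_mul] using hasSum_centralBinom_mul_pow abs_lt_quarter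

lemma two_mul_choose_two_mul_add_one (n : ℕ) :
    2 * (2 * n + 1).choose n = (n + 1).centralBinom := by
  rw [Nat.centralBinom_eq_two_mul_choose, mul_add_one, Nat.choose_succ_succ,
    Nat.choose_symm_half, two_mul]

lemma summable_choose_mul_pow {x : ℝ} (h0 : 0 ≤ x) (hx : x < 1 / 2) (ν : ℕ) :
    Summable fun n : ℕ ↦ (2 * n + ν).choose n * x ^ (2 * n + ν) := by
  have ratio_lt_one : (2 * x) ^ 2 < 1 := by
    rw [sq_lt_one_iff₀ (by positivity)]
    linarith
  refine .of_nonneg_of_le (fun n ↦ by positivity) (fun n ↦ ?_)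
    ((summable_geometric_of_lt_one (by positivity) ratio_lt_one).mul_right ((2 * x) ^ ν))
  calc (2 * n + ν).choose n * x ^ (2 * n + ν)
      ≤ 2 ^ (2 * n + ν) * x ^ (2 * n + ν) := by
        gcongr
        exact_mod_cast Nat.choose_le_two_pow _ _
    _ = ((2 * x) ^ 2) ^ n * (2 * x) ^ ν := by
        rw [← mul_pow, ← pow_mul, ← pow_add]

end CentralBinom

section PowerSeries

lemma integral_pow_mul_exp_neg_mul_Ioi {p : ℝ} (hp : 0 < p) (k : ℕ) :
    ∫ s in Ioi (0 : ℝ), s ^ k * exp (-(p * s)) = k ! / p ^ (k + 1) := by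
  have h := integral_rpow_mul_exp_neg_mul_Ioi (a := k + 1) (by positivity) hp
  simp only [add_sub_cancel_right, rpow_natCast, Gamma_nat_eq_factorial] at h
  rw [h, ← Nat.cast_succ, rpow_natCast, one_div_pow, one_div_mul_eq_div]

lemma integrableOn_pow_mul_exp_neg_mul_Ioi {p : ℝ} (hp : 0 < p) (k : ℕ) :
    IntegrableOn (fun s : ℝ ↦ s ^ k * exp (-(p * s))) (Ioi 0) :=
  .of_integral_ne_zero (by rw [integral_pow_mul_exp_neg_mul_Ioi hp]; positivity)

lemma hasSum_integral_exp_neg_mul_tsum_pow {ι : Type*} [Countable ι] {p : ℝ} (hp : 0 < p)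
    (c : ι → ℝ) (k : ι → ℕ) (h : Summable fun i ↦ |c i| * ((k i)! / p ^ (k i + 1))) :
    HasSum (fun i ↦ c i * ((k i)! / p ^ (k i + 1)))
      (∫ s in Ioi (0 : ℝ), exp (-(p * s)) * ∑' i, c i * s ^ k i) := by
  have integral_norm (i : ι) : ∫ s in Ioi (0 : ℝ), ‖c i * (s ^ k i * exp (-(p * s)))‖ =
      |c i| * ((k i)! / p ^ (k i + 1)) := by
    rw [← integral_pow_mul_exp_neg_mul_Ioi hp, ← integral_const_mul]
    refine setIntegral_congr_fun measurableSet_Ioi fun s (hs : 0 < s) ↦ ?_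
    rw [norm_mul, norm_eq_abs, norm_of_nonneg (by positivity)]
  convert! hasSum_integral_of_summable_integral_norm
    (fun i ↦ (integrableOn_pow_mul_exp_neg_mul_Ioi hp (k i)).const_mul (c i))
    (by simpa only [integral_norm] using h) using 1
  · funext i
    rw [integral_const_mul, integral_pow_mul_exp_neg_mul_Ioi hp]
  · simp only [← tsum_mul_left]
    congr! 4
    ring

end PowerSeries

/-- The modified Bessel function `I_ν` of the first kind on the real line, for an order `ν : ℕ`,
defined by its power series. -/
noncomputable def besselI (ν : ℕ) (z : ℝ) : ℝ :=
  ∑' n : ℕ, (z / 2) ^ (2 * n + ν) / (n ! * (n + ν)!)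

lemma summable_besselI (ν : ℕ) (z : ℝ) :
    Summable fun n : ℕ ↦ (z / 2) ^ (2 * n + ν) / (n ! * (n + ν)! : ℝ) := by
  refine ((summable_pow_div_factorial ((z / 2) ^ 2)).mul_right |(z / 2) ^ ν|).of_norm_bounded
    fun n ↦ ?_
  have one_le_factorial : (1 : ℝ) ≤ (n + ν)! := mod_cast (n + ν).factorial_pos
  calc ‖(z / 2) ^ (2 * n + ν) / (n ! * (n + ν)! : ℝ)‖
      = ((z / 2) ^ 2) ^ n / (n ! * (n + ν)!) * |(z / 2) ^ ν| := by
        rw [norm_div, norm_of_nonneg (by positivity : (0 : ℝ) ≤ n ! * (n + ν)!), pow_add, pow_mul,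
          norm_mul, norm_of_nonneg (by positivity), norm_eq_abs, mul_div_right_comm]
    _ ≤ ((z / 2) ^ 2) ^ n / n ! * |(z / 2) ^ ν| := by
        gcongr
        exact le_mul_of_one_le_right (by positivity) one_le_factorial

lemma cbinom_two_mul_self (s : ℝ) :
    cbinom (2 * s) s = 2 * besselI 0 (2 * s) + 2 * besselI 1 (2 * s) := by
  simp only [cbinom, besselI, ← tsum_mul_left]
  rw [← ((summable_besselI 0 _).mul_left 2).tsum_add ((summable_besselI 1 _).mul_left 2)]
  congr! 2 with n
  rw [show s * (2 * s - s) = s ^ 2 by ring, mul_div_cancel_left₀ s two_ne_zero]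
  ring_nf

section LaplaceBesselI

variable {a p : ℝ}

lemma hasSum_integral_exp_neg_mul_besselI (h : |a| < p) (ν : ℕ) :
    HasSum (fun n : ℕ ↦ (2 * n + ν).choose n * (a / (2 * p)) ^ (2 * n + ν) / p)
      (∫ s in Ioi (0 : ℝ), exp (-(p * s)) * besselI ν (a * s)) := by
  have hp : 0 < p := (abs_nonneg a).trans_lt h
  have abs_lt_half : |a / (2 * p)| < 1 / 2 := by
    rw [abs_div, abs_of_pos (by positivity : 0 < 2 * p), div_lt_iff₀ (by positivity)]
    linarith
  let c (n : ℕ) : ℝ := (a / 2) ^ (2 * n + ν) / (n ! * (n + ν)!)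
  have coeff_eq (b : ℝ) (n : ℕ) :
      b ^ (2 * n + ν) / (n ! * (n + ν)!) * ((2 * n + ν)! / p ^ (2 * n + ν + 1)) =
        (2 * n + ν).choose n * (b / p) ^ (2 * n + ν) / p := by
    rw [show 2 * n + ν = n + (n + ν) by ring, Nat.cast_add_choose, div_pow, pow_succ]
    field_simp
  have coeff_abs (n : ℕ) : |c n| = |a / 2| ^ (2 * n + ν) / (n ! * (n + ν)!) := by
    rw [abs_div, abs_pow, abs_of_pos (by positivity : (0 : ℝ) < n ! * (n + ν)!)]
  have abs_summable : Summable fun n ↦ |c n| * ((2 * n + ν)! / p ^ (2 * n + ν + 1)) := by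
    convert! (summable_choose_mul_pow (abs_nonneg _) abs_lt_half ν).div_const p using 2 with n
    rw [coeff_abs, coeff_eq, ← div_div, abs_div _ p, abs_of_pos hp]
  convert! hasSum_integral_exp_neg_mul_tsum_pow hp c (fun n ↦ 2 * n + ν) abs_summable using 1
  · funext n
    rw [coeff_eq, div_div]
  · congr! 3 with s
    simp only [besselI, c, div_mul_eq_mul_div, ← mul_pow]

lemma integral_exp_neg_mul_besselI_zero (h : |a| < p) :
    ∫ s in Ioi (0 : ℝ), exp (-(p * s)) * besselI 0 (a * s) = (√(p ^ 2 - a ^ 2))⁻¹ := by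
  have hp : 0 < p := (abs_nonneg a).trans_lt h
  refine (hasSum_integral_exp_neg_mul_besselI h 0).unique ?_
  convert! (hasSum_centralBinom_mul_div_pow h).div_const p using 1
  field_simp

lemma integral_exp_neg_mul_besselI_one (ha : a ≠ 0) (h : |a| < p) :
    ∫ s in Ioi (0 : ℝ), exp (-(p * s)) * besselI 1 (a * s) = (p / √(p ^ 2 - a ^ 2) - 1) / a := by
  have hp : 0 < p := (abs_nonneg a).trans_lt h
  refine (hasSum_integral_exp_neg_mul_besselI h 1).unique ?_
  convert! ((hasSum_nat_add_iff' 1).2 (hasSum_centralBinom_mul_div_pow h)).div_const a using 1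
  · funext n
    rw [← two_mul_choose_two_mul_add_one]
    push_cast
    rw [mul_add_one, pow_succ _ (2 * n + 1)]
    field_simp
  · simp

lemma integrableOn_exp_neg_mul_besselI_zero (h : |a| < p) :
    IntegrableOn (fun s ↦ exp (-(p * s)) * besselI 0 (a * s)) (Ioi 0) := by
  have : 0 < p ^ 2 - a ^ 2 := sub_pos.2 (sq_lt_sq.2 (h.trans_le (le_abs_self p)))
  exact .of_integral_ne_zero (by rw [integral_exp_neg_mul_besselI_zero h]; positivity)

lemma integrableOn_exp_neg_mul_besselI_one (ha : a ≠ 0) (h : |a| < p) :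
    IntegrableOn (fun s ↦ exp (-(p * s)) * besselI 1 (a * s)) (Ioi 0) := by
  have hp : 0 < p := (abs_nonneg a).trans_lt h
  have sqrt_lt : √(p ^ 2 - a ^ 2) < p := by
    rw [sqrt_lt' hp]
    linarith [sq_pos_of_ne_zero ha]
  have sqrt_pos : 0 < √(p ^ 2 - a ^ 2) :=
    Real.sqrt_pos.2 (sub_pos.2 (sq_lt_sq.2 (h.trans_le (le_abs_self p))))
  refine .of_integral_ne_zero ?_
  rw [integral_exp_neg_mul_besselI_one ha h]
  exact div_ne_zero (sub_pos.2 ((one_lt_div sqrt_pos).2 sqrt_lt)).ne' ha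

end LaplaceBesselI

lemma sqrt_add_div_sub {a p : ℝ} (h : 0 < p + a) :
    √((p + a) / (p - a)) = (p + a) / √(p ^ 2 - a ^ 2) := by
  rw [← mul_div_mul_left (p + a) (p - a) h.ne', ← sq, ← sq_sub_sq, sqrt_div (sq_nonneg _),
    sqrt_sq h.le]

theorem laplace_central_cbinom (p : ℝ) (hp : 2 < p) :
    (∫ s in Set.Ioi (0 : ℝ), Real.exp (-(p * s)) * cbinom (2 * s) s) =
      Real.sqrt ((p + 2) / (p - 2)) - 1 := by
  have h : |(2 : ℝ)| < p := by rwa [abs_two]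
  calc ∫ s in Ioi (0 : ℝ), exp (-(p * s)) * cbinom (2 * s) s
      = ∫ s in Ioi (0 : ℝ), (2 * (exp (-(p * s)) * besselI 0 (2 * s)) +
          2 * (exp (-(p * s)) * besselI 1 (2 * s))) := by
        congr! 2 with s
        rw [cbinom_two_mul_self]
        ring
    _ = 2 * (√(p ^ 2 - 2 ^ 2))⁻¹ + 2 * ((p / √(p ^ 2 - 2 ^ 2) - 1) / 2) := by
        rw [integral_add ((integrableOn_exp_neg_mul_besselI_zero h).const_mul 2)
            ((integrableOn_exp_neg_mul_besselI_one two_ne_zero h).const_mul 2),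
          integral_const_mul, integral_const_mul, integral_exp_neg_mul_besselI_zero h,
          integral_exp_neg_mul_besselI_one two_ne_zero h]
    _ = √((p + 2) / (p - 2)) - 1 := by
        rw [sqrt_add_div_sub (by linarith)]
        ring
end
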